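/- Suppose the standing assumptions on f, g, h, Ω, F hold together with Assumptions 1 and 2, and let (x^k), (y^k), (c_k), (α_k) be generated by PGSA. Set c₀ := F(x⁰) and M := sup{g(x) : x ∈ ℝⁿ, F(x) ≤ c₀}. Then: (i) the sequence (x^k) is bounded; (ii) M is finite and positive, and with a := (1/ᾱ − L)/M > 0 one has F(x^{k+1}) + (a/2)·‖x^{k+1} − x^k‖₂² ≤ F(x^k) for every k ∈ ℕ. -/

import Mathlib

open Filter Topology
open scoped RealInnerProductSpace

noncomputable section

/-- The Fréchet subdifferential of an extended-real-valued function `φ` at `x`: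
the set of `y` with `liminf_{z→x, z≠x} (φ z − φ x − ⟨y, z−x⟩)/‖z−x‖ ≥ 0`,
empty when `φ x = +∞`. -/
def fsub {n : ℕ} (φ : EuclideanSpace ℝ (Fin n) → EReal) (x : EuclideanSpace ℝ (Fin n)) :
    Set (EuclideanSpace ℝ (Fin n)) :=
  {y | φ x ≠ ⊤ ∧
    0 ≤ liminf (fun z => (φ z - φ x - ((⟪y, z - x⟫ : ℝ) : EReal)) / ((‖z - x‖ : ℝ) : EReal))
      (𝓝[≠] x)}

/-- The limiting (Mordukhovich) subdifferential. -/
def lsub {n : ℕ} (φ : EuclideanSpace ℝ (Fin n) → EReal) (x : EuclideanSpace ℝ (Fin n)) :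
    Set (EuclideanSpace ℝ (Fin n)) :=
  {y | ∃ u : ℕ → EuclideanSpace ℝ (Fin n), ∃ v : ℕ → EuclideanSpace ℝ (Fin n),
      Tendsto u atTop (𝓝 x) ∧ Tendsto (fun k => φ (u k)) atTop (𝓝 (φ x)) ∧
      (∀ k, v k ∈ fsub φ (u k)) ∧ Tendsto v atTop (𝓝 y)}

/-- The subdifferential of a convex real-valued function. -/
def csub {n : ℕ} (g : EuclideanSpace ℝ (Fin n) → ℝ) (x : EuclideanSpace ℝ (Fin n)) :
    Set (EuclideanSpace ℝ (Fin n)) :=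
  {y | ∀ z, g x + ⟪y, z - x⟫ ≤ g z}

/-- The (possibly set-valued) proximity operator of a proper lsc extended-real-valued
function `ψ` at `u`. -/
def proxSet {n : ℕ} (ψ : EuclideanSpace ℝ (Fin n) → EReal) (u : EuclideanSpace ℝ (Fin n)) :
    Set (EuclideanSpace ℝ (Fin n)) :=
  {y | ∀ z, ψ y + ((‖y - u‖ ^ 2 / 2 : ℝ) : EReal) ≤ ψ z + ((‖z - u‖ ^ 2 / 2 : ℝ) : EReal)}

/-- The fractional objective `F = (f+h)/g` on `Ω ∩ dom f`, `+∞` elsewhere. -/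
def Ffrac {n : ℕ} (f : EuclideanSpace ℝ (Fin n) → EReal) (g h : EuclideanSpace ℝ (Fin n) → ℝ) :
    EuclideanSpace ℝ (Fin n) → EReal :=
  fun x => if g x ≠ 0 ∧ f x ≠ ⊤ then ((((f x).toReal + h x) / g x : ℝ) : EReal) else ⊤

theorem descent_aux {n : ℕ} (h : EuclideanSpace ℝ (Fin n) → ℝ)
    (h' : EuclideanSpace ℝ (Fin n) → EuclideanSpace ℝ (Fin n)) (L : ℝ) (hL : 0 < L)
    (hh_grad : ∀ z, HasGradientAt h (h' z) z)
    (hh_lip : LipschitzWith (Real.toNNReal L) h') (u d : EuclideanSpace ℝ (Fin n)) :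
    h (u + d) ≤ h u + ⟪h' u, d⟫ + L / 2 * ‖d‖ ^ 2 := by
  have hder : ∀ t : ℝ, HasDerivAt
      (fun t : ℝ => h (u + t • d) - t * ⟪h' u, d⟫ - L / 2 * ‖d‖ ^ 2 * t ^ 2)
      (⟪h' (u + t • d), d⟫ - ⟪h' u, d⟫ - L * ‖d‖ ^ 2 * t) t := by
    intro t
    have h1 : HasDerivAt (fun t : ℝ => u + t • d) d t := by
      simpa using ((hasDerivAt_id t).smul_const d).const_add u
    have h2 := (hh_grad (u + t • d)).hasFDerivAt.comp_hasDerivAt t h1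
    have h3 : HasDerivAt (fun t : ℝ => t * ⟪h' u, d⟫) (⟪h' u, d⟫) t := by
      simpa using (hasDerivAt_id t).mul_const (⟪h' u, d⟫)
    have h4 : HasDerivAt (fun t : ℝ => L / 2 * ‖d‖ ^ 2 * t ^ 2) (L * ‖d‖ ^ 2 * t) t := by
      refine ((hasDerivAt_pow 2 t).const_mul (L / 2 * ‖d‖ ^ 2)).congr_deriv ?_
      push_cast
      ring
    have h5 := (h2.sub h3).sub h4
    exact h5.congr_deriv (by simp)
  have hanti : AntitoneOn
      (fun t : ℝ => h (u + t • d) - t * ⟪h' u, d⟫ - L / 2 * ‖d‖ ^ 2 * t ^ 2) (Set.Ici 0) := by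
    refine antitoneOn_of_deriv_nonpos (convex_Ici 0)
      (fun t _ => (hder t).continuousAt.continuousWithinAt)
      (fun t _ => (hder t).differentiableAt.differentiableWithinAt) ?_
    intro t ht
    rw [interior_Ici] at ht
    have ht0 : 0 < t := ht
    rw [(hder t).deriv, ← inner_sub_left]
    have e1 := real_inner_le_norm (h' (u + t • d) - h' u) d
    have e2 := hh_lip.dist_le_mul (u + t • d) u
    rw [dist_eq_norm, dist_eq_norm, Real.coe_toNNReal L hL.le, add_sub_cancel_left, norm_smul,
      Real.norm_of_nonneg ht0.le] at e2
    have e3 := mul_le_mul_of_nonneg_right e2 (norm_nonneg d)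
    nlinarith
  have := hanti (Set.mem_Ici.2 le_rfl) (Set.mem_Ici.2 zero_le_one) zero_le_one
  simp at this
  linarith

/-- One step of the algorithm. -/
theorem step_aux {n : ℕ} (f : EuclideanSpace ℝ (Fin n) → EReal)
    (g h : EuclideanSpace ℝ (Fin n) → ℝ)
    (h' : EuclideanSpace ℝ (Fin n) → EuclideanSpace ℝ (Fin n)) (L : ℝ)
    (hf_ne_bot : ∀ z, f z ≠ ⊥) (hL : 0 < L)
    (hh_grad : ∀ z, HasGradientAt h (h' z) z)
    (hh_lip : LipschitzWith (Real.toNNReal L) h')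
    (hfh : ∀ z, 0 ≤ f z + ((h z : ℝ) : EReal))
    (hg_pos : ∀ z, f z ≠ ⊤ → g z ≠ 0 → 0 < g z)
    (hA1 : ∀ z, g z = 0 → f z + ((h z : ℝ) : EReal) ≠ 0)
    (x p y : EuclideanSpace ℝ (Fin n)) (c α : ℝ) (hα : 0 < α) (hαL : L < 1 / α)
    (hx : g x ≠ 0 ∧ f x ≠ ⊤) (hy : y ∈ csub g x)
    (hc : c = ((f x).toReal + h x) / g x)
    (hp : p ∈ proxSet (fun z => (α : EReal) * f z) (x - α • h' x + (α * c) • y)) :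
    g p ≠ 0 ∧ f p ≠ ⊤ ∧
      (f p).toReal + h p + (1 / α - L) / 2 * ‖p - x‖ ^ 2 ≤ c * g p := by
  have hgx := hg_pos x hx.2 hx.1
  have key := hp x
  obtain ⟨fx, hfx⟩ : ∃ r : ℝ, f x = r := ⟨_, (EReal.coe_toReal hx.2 (hf_ne_bot x)).symm⟩
  have hpt : f p ≠ ⊤ := by
    intro ht
    simp only [ht, hfx] at key
    rw [EReal.coe_mul_top_of_pos hα, EReal.top_add_coe, ← EReal.coe_mul, ← EReal.coe_add,
      top_le_iff] at key
    exact EReal.coe_ne_top _ key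
  obtain ⟨fp, hfp⟩ : ∃ r : ℝ, f p = r := ⟨_, (EReal.coe_toReal hpt (hf_ne_bot p)).symm⟩
  have hfhx := hfh x
  have hfhp := hfh p
  have hA := hA1 p
  simp only [hfx, hfp] at key hfhx hfhp hA
  norm_cast at key hfhx hfhp hA
  rw [hfx, EReal.toReal_coe] at hc
  rw [hfp, EReal.toReal_coe]
  have hc0 : 0 ≤ c := by rw [hc]; positivity
  have hcg : c * g x = fx + h x := by rw [hc]; field_simp
  have hd := descent_aux h h' L hL hh_grad hh_lip x (p - x)
  rw [add_sub_cancel] at hd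
  have hyp := mul_le_mul_of_nonneg_left (hy p) hc0
  have e1 : p - (x - α • h' x + (α * c) • y) = (p - x) - α • (c • y - h' x) := by
    module
  have e2 : x - (x - α • h' x + (α * c) • y) = - (α • (c • y - h' x)) := by
    module
  rw [e1, e2, norm_neg, norm_sub_sq_real, inner_smul_right, inner_sub_right, inner_smul_right,
    real_inner_comm y, real_inner_comm (h' x)] at key
  have key2 : fp + 1 / α / 2 * ‖p - x‖ ^ 2 - (c * ⟪y, p - x⟫ - ⟪h' x, p - x⟫) ≤ fx := by
    have : α * (fp + 1 / α / 2 * ‖p - x‖ ^ 2 - (c * ⟪y, p - x⟫ - ⟪h' x, p - x⟫)) ≤ α * fx := by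
      have : α * (1 / α / 2 * ‖p - x‖ ^ 2) = ‖p - x‖ ^ 2 / 2 := by field_simp
      linarith
    exact le_of_mul_le_mul_left this hα
  have main : fp + h p + (1 / α - L) / 2 * ‖p - x‖ ^ 2 ≤ c * g p := by
    linarith
  refine ⟨?_, EReal.coe_ne_top _, main⟩
  intro hg0
  rw [hg0, mul_zero] at main
  have : 0 ≤ (1 / α - L) / 2 * ‖p - x‖ ^ 2 := by
    have : 0 < 1 / α - L := by linarith
    positivity
  exact hA hg0 (by linarith)

/-- Lemma 4.7: under Assumptions 1 and 2, the PGSA sequence is bounded and satisfies a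
sufficient-decrease property. -/
theorem pgsa_bounded_and_sufficient_decrease
    {n : ℕ} (hn : 1 ≤ n)
    (f : EuclideanSpace ℝ (Fin n) → EReal) (g h : EuclideanSpace ℝ (Fin n) → ℝ)
    (h' : EuclideanSpace ℝ (Fin n) → EuclideanSpace ℝ (Fin n)) (L : ℝ)
    (hf_ne_bot : ∀ z, f z ≠ ⊥) (hf_proper : ∃ z, f z ≠ ⊤)
    (hf_lsc : LowerSemicontinuous f)
    (hf_bdd : ∃ m : ℝ, ∀ z, (m : EReal) ≤ f z)
    (hf_cont : ContinuousOn f {z | f z ≠ ⊤})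
    (hg_cvx : ConvexOn ℝ Set.univ g)
    (hL : 0 < L)
    (hh_grad : ∀ z, HasGradientAt h (h' z) z)
    (hh_lip : LipschitzWith (Real.toNNReal L) h')
    (hΩ : ∃ z, g z ≠ 0)
    (hfh : ∀ z, 0 ≤ f z + ((h z : ℝ) : EReal))
    (hg_pos : ∀ z, f z ≠ ⊤ → g z ≠ 0 → 0 < g z)
    (hA1 : ∀ z, g z = 0 → f z + ((h z : ℝ) : EReal) ≠ 0)
    (hA2 : ∀ t : ℝ, Bornology.IsBounded {z | Ffrac f g h z ≤ (t : EReal)})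
    (x y : ℕ → EuclideanSpace ℝ (Fin n)) (c α : ℕ → ℝ) (αlo αhi : ℝ)
    (hx0 : g (x 0) ≠ 0 ∧ f (x 0) ≠ ⊤)
    (hαlo : 0 < αlo) (hαhi : αhi < 1 / L) (hα : ∀ k, αlo ≤ α k ∧ α k ≤ αhi)
    (hy : ∀ k, y (k + 1) ∈ csub g (x k))
    (hc : ∀ k, c k = ((f (x k)).toReal + h (x k)) / g (x k))
    (hiter : ∀ k, x (k + 1) ∈ proxSet (fun z => ((α k : ℝ) : EReal) * f z)
      (x k - α k • h' (x k) + (α k * c k) • y (k + 1)))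
    (c₀ : ℝ) (hc₀ : (c₀ : EReal) = Ffrac f g h (x 0))
    (M : ℝ) (hM : M = sSup (g '' {z | Ffrac f g h z ≤ (c₀ : EReal)}))
    (a : ℝ) (ha : a = (1 / αhi - L) / M) :
    Bornology.IsBounded (Set.range x) ∧
      (g '' {z | Ffrac f g h z ≤ (c₀ : EReal)}).Nonempty ∧
      BddAbove (g '' {z | Ffrac f g h z ≤ (c₀ : EReal)}) ∧
      0 < M ∧ 0 < a ∧
      ∀ k, Ffrac f g h (x (k + 1)) + ((a / 2 * ‖x (k + 1) - x k‖ ^ 2 : ℝ) : EReal) ≤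
        Ffrac f g h (x k) := by
  have hα0 : ∀ k, 0 < α k := fun k => hαlo.trans_le (hα k).1
  have hhi0 : 0 < αhi := (hα0 0).trans_le (hα 0).2
  have hLhi : L < 1 / αhi := by
    rw [lt_div_iff₀ hL] at hαhi
    rw [lt_div_iff₀ hhi0]; linarith
  have hinv : ∀ k, 1 / αhi ≤ 1 / α k := fun k => one_div_le_one_div_of_le (hα0 k) (hα k).2
  have hF : ∀ z, g z ≠ 0 → f z ≠ ⊤ →
      Ffrac f g h z = ((((f z).toReal + h z) / g z : ℝ) : EReal) := by
    intro z h1 h2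
    simp [Ffrac, h1, h2]
  have step := fun k (hk : g (x k) ≠ 0 ∧ f (x k) ≠ ⊤) =>
    step_aux f g h h' L hf_ne_bot hL hh_grad hh_lip hfh hg_pos hA1 (x k) (x (k + 1)) (y (k + 1))
      (c k) (α k) (hα0 k) (hLhi.trans_le (hinv k)) hk (hy k) (hc k) (hiter k)
  have hdom : ∀ k, g (x k) ≠ 0 ∧ f (x k) ≠ ⊤ := by
    intro k
    induction k with
    | zero => exact hx0
    | succ k ih => exact ⟨(step k ih).1, (step k ih).2.1⟩
  have hgp : ∀ k, 0 < g (x k) := fun k => hg_pos _ (hdom k).2 (hdom k).1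
  have hFx : ∀ k, Ffrac f g h (x k) = (c k : EReal) := fun k => by
    rw [hF _ (hdom k).1 (hdom k).2, hc k]
  have hc00 : c₀ = c 0 := by
    have := hc₀.trans (hFx 0)
    exact_mod_cast this
  have hcg : ∀ k, c k * g (x k) = (f (x k)).toReal + h (x k) := fun k => by
    have := hgp k
    rw [hc k]; field_simp
  have hdec : ∀ k, c (k + 1) * g (x (k + 1)) + (1 / αhi - L) / 2 * ‖x (k + 1) - x k‖ ^ 2
      ≤ c k * g (x (k + 1)) := by
    intro k
    have h1 := (step k (hdom k)).2.2
    rw [← hcg (k + 1)] at h1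
    have h2 := mul_le_mul_of_nonneg_right (hinv k) (sq_nonneg ‖x (k + 1) - x k‖)
    linarith
  have hmono : ∀ k, c (k + 1) ≤ c k := by
    intro k
    have h0 : 0 ≤ (1 / αhi - L) / 2 * ‖x (k + 1) - x k‖ ^ 2 := by
      have : 0 < 1 / αhi - L := by linarith
      positivity
    refine le_of_mul_le_mul_right ?_ (hgp (k + 1))
    linarith [hdec k]
  have hcle : ∀ k, c k ≤ c₀ := fun k => by
    rw [hc00]; exact antitone_nat_of_succ_le hmono (Nat.zero_le k)
  have hmem : ∀ k, x k ∈ {z | Ffrac f g h z ≤ (c₀ : EReal)} := fun k => by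
    rw [Set.mem_ofPred_eq, hFx]
    exact_mod_cast hcle k
  have hne : (g '' {z | Ffrac f g h z ≤ (c₀ : EReal)}).Nonempty := ⟨_, _, hmem 0, rfl⟩
  have hbdd : BddAbove (g '' {z | Ffrac f g h z ≤ (c₀ : EReal)}) := by
    have hcomp := (hA2 c₀).isCompact_closure
    exact (hcomp.bddAbove_image hg_cvx.locallyLipschitz.continuous.continuousOn).mono
      (Set.image_mono subset_closure)
  have hgM : ∀ k, g (x k) ≤ M := fun k => by
    rw [hM]; exact le_csSup hbdd ⟨_, hmem k, rfl⟩
  have hM0 : 0 < M := (hgp 0).trans_le (hgM 0)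
  have ha0 : 0 < a := by
    rw [ha]; exact div_pos (by linarith) hM0
  refine ⟨(hA2 c₀).subset ?_, hne, hbdd, hM0, ha0, ?_⟩
  · rintro _ ⟨k, rfl⟩
    exact hmem k
  · intro k
    rw [hFx, hFx]
    norm_cast
    refine le_of_mul_le_mul_right ?_ (hgp (k + 1))
    have haM : a * M = 1 / αhi - L := by rw [ha]; field_simp
    have h1 : a * g (x (k + 1)) ≤ 1 / αhi - L := by
      rw [← haM]; exact mul_le_mul_of_nonneg_left (hgM _) ha0.le
    have h2 := mul_le_mul_of_nonneg_right h1 (sq_nonneg ‖x (k + 1) - x k‖)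
    linarith [hdec k]
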